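/- For every n with 4 ≤ n ≤ 7, there is a Marcello step from the cycle graph C_n (vertices v_1, …, v_n with edges v_i v_{i+1} for 1 ≤ i ≤ n−1 together with v_1 v_n) to the complete graph on its n vertices; since C_n is not complete for n ≥ 4, ϖ(C_n) = 1 for n = 4, 5, 6, 7. -/

import Mathlib

open SimpleGraph

attribute [local instance] Classical.propDecidable

/-- The degree of a vertex. -/
noncomputable def mdeg {V : Type*} (G : SimpleGraph V) (v : V) : ℕ :=
  (G.neighborSet v).ncard

/-- `G'` is obtained from `G` by a Marcello step. -/
def MarcelloStep {V : Type*} [Fintype V] (G G' : SimpleGraph V) : Prop :=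
  G ≤ G' ∧ ∃ f : Sym2 V → V,
    (∀ e ∈ G'.edgeSet \ G.edgeSet, f e ∈ e) ∧
    (∀ v : V, (∃ e ∈ G'.edgeSet \ G.edgeSet, f e = v) →
        0 < mdeg G v ∧ mdeg G v < Fintype.card V - 1) ∧
    (∀ v : V, ((G'.edgeSet \ G.edgeSet) ∩ {e | f e = v}).ncard ≤ mdeg G v)

/-- There is a Marcello chain of length `k` from `G` to `H`. -/
def MarcelloChain {V : Type*} [Fintype V] (G H : SimpleGraph V) (k : ℕ) : Prop :=
  ∃ c : ℕ → SimpleGraph V, c 0 = G ∧ c k = H ∧ ∀ i < k, MarcelloStep (c i) (c (i + 1))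

/-- The Marcello number `ϖ(G)`. -/
noncomputable def marcelloNumber {V : Type*} [Fintype V] (G : SimpleGraph V) : ℕ :=
  sInf {k | MarcelloChain G (⊤ : SimpleGraph V) k}

/-- The sum of degrees over vertices `v` with `0 < deg v < n - 1`. -/
noncomputable def marcelloSum {V : Type*} [Fintype V] (G : SimpleGraph V) : ℕ :=
  ∑ v ∈ Finset.univ.filter
      (fun v => 0 < mdeg G v ∧ mdeg G v < Fintype.card V - 1), mdeg G v

/-!
A new edge given to one of its ends forces that end to be non-universal and, by the bound on the
number of edges it initiates, non-isolated. So a Marcello step only needs every vertex `v` to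
choose at most `deg v` targets such that each new edge joins some vertex to one of its targets. In
the cycle every vertex may choose two targets; it chooses the vertices two and three places ahead
of it. When `n ≤ 7`, any two vertices are at most three places apart in one of the two directions,
so all chords are covered.
-/

section MarcelloStep

variable {V : Type*}

theorem mdeg_eq_degree (G : SimpleGraph V) (v : V) [Fintype (G.neighborSet v)] :
    mdeg G v = G.degree v := by
  rw [mdeg, Set.ncard_eq_toFinset_card', degree, neighborFinset]

variable [Fintype V] {G H : SimpleGraph V}

theorem mdeg_lt_card_sub_one {v w : V} (hne : v ≠ w) (hadj : ¬G.Adj v w) :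
    mdeg G v < Fintype.card V - 1 := by
  rw [mdeg_eq_degree, degree_lt_card_sub_one]
  exact fun huniv => hadj (huniv hne)

theorem MarcelloStep.of_initiator (hle : G ≤ H) (f : Sym2 V → V)
    (hmem : ∀ e ∈ H.edgeSet \ G.edgeSet, f e ∈ e)
    (hcard : ∀ v, ((H.edgeSet \ G.edgeSet) ∩ {e | f e = v}).ncard ≤ mdeg G v) :
    MarcelloStep G H := by
  refine ⟨hle, f, hmem, ?_, hcard⟩
  rintro _ ⟨e, he, rfl⟩
  obtain ⟨w, hw⟩ := hmem e he
  have hpos : 0 < ((H.edgeSet \ G.edgeSet) ∩ {e' | f e' = f e}).ncard :=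
    (Set.ncard_pos (Set.toFinite _)).2 ⟨e, he, rfl⟩
  rw [hw, Set.mem_sdiff, mem_edgeSet, mem_edgeSet] at he
  exact ⟨hpos.trans_le (hcard _), mdeg_lt_card_sub_one he.1.ne he.2⟩

theorem MarcelloStep.of_targets (hle : G ≤ H) (targets : V → Finset V)
    (hcard : ∀ v, (targets v).card ≤ mdeg G v)
    (hcover : ∀ v w, H.Adj v w → ¬G.Adj v w → w ∈ targets v ∨ v ∈ targets w) :
    MarcelloStep G H := by
  have exists_target : ∀ e : Sym2 V, ∃ v, e ∈ H.edgeSet \ G.edgeSet →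
      ∃ w ∈ targets v, s(v, w) = e := by
    intro e
    induction e with | _ a b =>
    by_cases hb : b ∈ targets a
    · exact ⟨a, fun _ => ⟨b, hb, rfl⟩⟩
    · exact ⟨b, fun he => ⟨a, (hcover a b he.1 he.2).resolve_left hb, Sym2.eq_swap⟩⟩
  choose f hf using exists_target
  refine .of_initiator hle f (fun e he => ?_) fun v => ?_
  · obtain ⟨w, -, hw⟩ := hf e he
    exact ⟨w, hw.symm⟩
  · have hsub : (H.edgeSet \ G.edgeSet) ∩ {e | f e = v} ⊆ (targets v).image (s(v, ·)) := by
      rintro e ⟨he, rfl⟩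
      simpa using hf e he
    calc ((H.edgeSet \ G.edgeSet) ∩ {e | f e = v}).ncard
        ≤ ((targets v).image (s(v, ·))).card := by
          rw [← Set.ncard_coe_finset]; exact Set.ncard_le_ncard hsub (Set.toFinite _)
      _ ≤ (targets v).card := Finset.card_image_le
      _ ≤ mdeg G v := hcard v

theorem marcelloChain_zero_iff : MarcelloChain G H 0 ↔ G = H :=
  ⟨fun ⟨_, h0, hH, _⟩ => h0.symm.trans hH, fun h => ⟨fun _ => G, rfl, h, by simp⟩⟩

theorem marcelloChain_one_iff : MarcelloChain G H 1 ↔ MarcelloStep G H := by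
  constructor
  · rintro ⟨c, rfl, rfl, hstep⟩
    exact hstep 0 one_pos
  · intro hstep
    refine ⟨fun i => if i = 0 then G else H, rfl, rfl, fun i hi => ?_⟩
    obtain rfl := Nat.lt_one_iff.1 hi
    exact hstep

theorem marcelloNumber_eq_one_iff : marcelloNumber G = 1 ↔ G ≠ ⊤ ∧ MarcelloStep G ⊤ := by
  rw [ne_eq, ← marcelloChain_zero_iff, ← marcelloChain_one_iff, marcelloNumber]
  constructor
  · intro hsInf
    have hpos : 0 < sInf {k | MarcelloChain G ⊤ k} := hsInf ▸ one_pos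
    exact ⟨Nat.notMem_of_lt_sInf hpos, hsInf ▸ Nat.sInf_mem (Nat.nonempty_of_pos_sInf hpos)⟩
  · rintro ⟨h0, h1⟩
    refine IsLeast.csInf_eq ⟨h1, fun k hk => Nat.one_le_iff_ne_zero.2 ?_⟩
    rintro rfl
    exact h0 hk

end MarcelloStep

section CycleGraph

variable {n : ℕ}

theorem mdeg_cycleGraph (hn : 3 ≤ n) (v : Fin n) : mdeg (cycleGraph n) v = 2 := by
  obtain ⟨m, rfl⟩ := Nat.exists_eq_add_of_le' hn
  rw [mdeg_eq_degree, cycleGraph_degree_three_le]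

theorem cycleGraph_ne_top (hn : 4 ≤ n) : cycleGraph n ≠ ⊤ := by
  intro htop
  have hdeg := mdeg_cycleGraph (by lia) (⟨0, by lia⟩ : Fin n)
  rw [htop, mdeg_eq_degree, complete_graph_degree, Fintype.card_fin] at hdeg
  lia

theorem val_sub_le_or_val_sub_le {k : ℕ} (hn : n ≤ 2 * k + 1) (u v : Fin n) :
    (u - v).val ≤ k ∨ (v - u).val ≤ k := by
  fin_omega

theorem two_le_val_sub_of_not_cycleGraph_adj {u v : Fin n} (hne : u ≠ v)
    (hadj : ¬(cycleGraph n).Adj u v) : 2 ≤ (u - v).val := by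
  have : NeZero n := u.neZero
  have hsub : (u - v).val ≠ 0 := Fin.val_ne_zero_iff.2 (sub_ne_zero.2 hne)
  rw [cycleGraph_adj'] at hadj
  lia

theorem card_filter_val_sub_mem_le (s : Finset ℕ) (v : Fin n) :
    (Finset.univ.filter fun w => (w - v).val ∈ s).card ≤ s.card := by
  refine Finset.card_le_card_of_injOn (fun w => (w - v).val) ?_ fun a _ b _ h => ?_
  · intro w hw
    simpa using hw
  · have : NeZero n := v.neZero
    exact sub_left_injective (Fin.val_injective h)

theorem marcelloStep_cycleGraph_top (h3 : 3 ≤ n) (h7 : n ≤ 7) :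
    MarcelloStep (cycleGraph n) ⊤ := by
  refine .of_targets le_top (fun v => Finset.univ.filter fun w => (w - v).val ∈ Finset.Icc 2 3)
    (fun v => ?_) fun v w hne hadj => ?_
  · rw [mdeg_cycleGraph h3]
    exact card_filter_val_sub_mem_le (Finset.Icc 2 3) v
  · have hvw := two_le_val_sub_of_not_cycleGraph_adj hne hadj
    have hwv := two_le_val_sub_of_not_cycleGraph_adj hne.symm (mt Adj.symm hadj)
    simp only [Finset.mem_filter_univ, Finset.mem_Icc]
    exact (val_sub_le_or_val_sub_le h7 w v).imp (⟨hwv, ·⟩) (⟨hvw, ·⟩)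

end CycleGraph

/-- For `4 ≤ n ≤ 7`, one Marcello step completes the cycle `C_n`, and `ϖ(C_n) = 1`. -/
theorem marcello_cycle_small (n : ℕ) (h4 : 4 ≤ n) (h7 : n ≤ 7) :
    MarcelloStep (SimpleGraph.cycleGraph n) (⊤ : SimpleGraph (Fin n)) ∧
      marcelloNumber (SimpleGraph.cycleGraph n) = 1 := by
  have hstep := marcelloStep_cycleGraph_top (by lia) h7
  exact ⟨hstep, marcelloNumber_eq_one_iff.2 ⟨cycleGraph_ne_top h4, hstep⟩⟩
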